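/- Let r be a positive integer and 0 < δ < 1/(100r). Let X₀,…,X_r be an SoS-augmented δ-weak martingale sequence of random variables with values in [0,1] such that X₀ = 1/2 almost surely and X_r ∈ {0,1} almost surely. Then P[ Σ_{i=1}^{r} (X_i − X_{i−1})² ≥ 1/16 ] ≥ 1/20. -/

import Mathlib

open MeasureTheory ENNReal

/-!
Let `S k` be the sum of squares of the first `k` increments. Expanding squares,
`(X r - c)² - (X 0 - c)² = S r + ∑ k < r, 2 (X k - c) (X (k + 1) - X k)`. Switch the `k`-th weight
`2 (X k - c)` off as soon as `S k ≥ θ`. The resulting weights are bounded functions of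
`(X k, S k)`, which is exactly the information the weak martingale condition allows, so the
switched-off cross terms have expectation at most of order `r δ`. Where `S r < θ` they equal
`(X r - c)² - (X 0 - c)² - S r`; elsewhere they are bounded below, since only one increment is
added to the sum when the threshold is crossed. Hence if `X` moves far from its starting point in
mean square, the event `θ ≤ S r` has substantial probability.
-/

section Pathwise

/-- The sum of squares `∑ j = 1, …, n, (x j - x (j - 1))²` of the first `n` increments of the path
`x`, indexed from `1` as in the definition of an SoS-augmented weak martingale. -/
def sumSqIncrements (x : ℕ → ℝ) (n : ℕ) : ℝ :=
  ∑ j ∈ Finset.Icc 1 n, (x j - x (j - 1)) ^ 2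

/-- The weight `2 (x k - c)` with which the increment after time `k` enters the expansion of
`(x n - c)²`, set to `0` from the first time the sum of squares reaches the threshold `θ`. -/
noncomputable def stoppedWeight (θ c : ℝ) (x : ℕ → ℝ) (k : ℕ) : ℝ :=
  if sumSqIncrements x k < θ then 2 * (x k - c) else 0

/-- The discrete stochastic integral of `stoppedWeight θ c x` along the path `x`: the cross terms in
the expansion of `(x n - c)²`, stopped once the sum of squares has reached `θ`. -/
noncomputable def stoppedCrossTerm (θ c : ℝ) (x : ℕ → ℝ) (n : ℕ) : ℝ :=
  ∑ k ∈ Finset.range n, stoppedWeight θ c x k * (x (k + 1) - x k)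

variable {x : ℕ → ℝ} {θ c K : ℝ} {k n : ℕ}

lemma sumSqIncrements_zero (x : ℕ → ℝ) : sumSqIncrements x 0 = 0 := by
  simp [sumSqIncrements]

lemma sumSqIncrements_succ (x : ℕ → ℝ) (n : ℕ) :
    sumSqIncrements x (n + 1) = sumSqIncrements x n + (x (n + 1) - x n) ^ 2 := by
  simp [sumSqIncrements, Finset.sum_Icc_succ_top]

lemma sumSqIncrements_le_succ (x : ℕ → ℝ) (n : ℕ) :
    sumSqIncrements x n ≤ sumSqIncrements x (n + 1) := by
  rw [sumSqIncrements_succ]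
  exact le_add_of_nonneg_right (sq_nonneg _)

lemma stoppedWeight_of_lt (h : sumSqIncrements x k < θ) :
    stoppedWeight θ c x k = 2 * (x k - c) :=
  if_pos h

lemma stoppedWeight_of_le (h : θ ≤ sumSqIncrements x k) : stoppedWeight θ c x k = 0 :=
  if_neg h.not_gt

lemma abs_stoppedWeight_le (h : |x k - c| ≤ K) : |stoppedWeight θ c x k| ≤ 2 * K := by
  rcases lt_or_ge (sumSqIncrements x k) θ with hS | hS
  · rw [stoppedWeight_of_lt hS, abs_mul, abs_two]
    gcongr
  · rw [stoppedWeight_of_le hS, abs_zero]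
    linarith [abs_nonneg (x k - c)]

lemma stoppedCrossTerm_zero (θ c : ℝ) (x : ℕ → ℝ) : stoppedCrossTerm θ c x 0 = 0 :=
  Finset.sum_range_zero _

lemma stoppedCrossTerm_succ (θ c : ℝ) (x : ℕ → ℝ) (n : ℕ) :
    stoppedCrossTerm θ c x (n + 1) =
      stoppedCrossTerm θ c x n + stoppedWeight θ c x n * (x (n + 1) - x n) :=
  Finset.sum_range_succ _ _

lemma stoppedCrossTerm_of_lt (h : sumSqIncrements x n < θ) :
    stoppedCrossTerm θ c x n = (x n - c) ^ 2 - (x 0 - c) ^ 2 - sumSqIncrements x n := by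
  induction n with
  | zero => simp [stoppedCrossTerm_zero, sumSqIncrements_zero]
  | succ n ih =>
    have hn := (sumSqIncrements_le_succ x n).trans_lt h
    rw [stoppedCrossTerm_succ, ih hn, stoppedWeight_of_lt hn, sumSqIncrements_succ]
    ring

lemma neg_sq_sub_le_stoppedCrossTerm (hθ : 0 ≤ θ) (hx : ∀ i ≤ n, |x i - c| ≤ K) :
    -(x 0 - c) ^ 2 - θ - 3 * K ^ 2 ≤ stoppedCrossTerm θ c x n := by
  induction n with
  | zero =>
    rw [stoppedCrossTerm_zero]
    linarith [sq_nonneg (x 0 - c), sq_nonneg K]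
  | succ n ih =>
    rw [stoppedCrossTerm_succ]
    rcases lt_or_ge (sumSqIncrements x n) θ with hS | hS
    · have hn : (x n - c) ^ 2 ≤ K ^ 2 := sq_le_sq.2 ((hx n n.le_succ).trans (le_abs_self K))
      have hn' : (x (n + 1) - c) ^ 2 ≤ K ^ 2 := sq_le_sq.2 ((hx _ le_rfl).trans (le_abs_self K))
      have hcross : -3 * K ^ 2 ≤ (x n - c) ^ 2 + 2 * (x n - c) * (x (n + 1) - x n) := by
        linarith [sq_nonneg ((x n - c) + (x (n + 1) - c))]
      rw [stoppedCrossTerm_of_lt hS, stoppedWeight_of_lt hS]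
      linarith
    · rw [stoppedWeight_of_le hS, zero_mul, add_zero]
      exact ih fun i hi => hx i (hi.trans n.le_succ)

lemma sq_sub_le_add_stoppedCrossTerm (hθ : 0 ≤ θ) (hx : ∀ i ≤ n, |x i - c| ≤ K) :
    (x n - c) ^ 2 ≤ (x 0 - c) ^ 2 + θ + stoppedCrossTerm θ c x n +
      if θ ≤ sumSqIncrements x n then 4 * K ^ 2 else 0 := by
  split_ifs with hS
  · have hn : (x n - c) ^ 2 ≤ K ^ 2 := sq_le_sq.2 ((hx n le_rfl).trans (le_abs_self K))
    linarith [neg_sq_sub_le_stoppedCrossTerm hθ hx]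
  · rw [stoppedCrossTerm_of_lt (not_le.1 hS)]
    linarith

end Pathwise

section CondExp

variable {Ω : Type*} {m m₀ : MeasurableSpace Ω} {μ : Measure Ω} {g Y Z : Ω → ℝ} {C δ : ℝ}

lemma integral_mul_condExp_of_stronglyMeasurable_left (hm : m ≤ m₀) [SigmaFinite (μ.trim hm)]
    (hg : StronglyMeasurable[m] g) (hgZ : Integrable (g * Z) μ) (hZ : Integrable Z μ) :
    ∫ ω, g ω * (μ[Z | m]) ω ∂μ = ∫ ω, g ω * Z ω ∂μ :=
  calc
    ∫ ω, g ω * (μ[Z | m]) ω ∂μ = ∫ ω, (μ[g * Z | m]) ω ∂μ :=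
      integral_congr_ae (condExp_mul_of_stronglyMeasurable_left hg hgZ hZ).symm
    _ = ∫ ω, g ω * Z ω ∂μ := integral_condExp hm

lemma integral_mul_sub_le_of_abs_condExp_sub_le [IsFiniteMeasure μ] (hm : m ≤ m₀)
    (hg : StronglyMeasurable[m] g) (hgC : ∀ᵐ ω ∂μ, |g ω| ≤ C) (hY : Integrable Y μ)
    (hZ : Integrable Z μ) (hYZ : ∀ᵐ ω ∂μ, |(μ[Z | m]) ω - Y ω| ≤ δ) :
    ∫ ω, g ω * (Z ω - Y ω) ∂μ ≤ μ.real Set.univ * (C * δ) := by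
  have integrable_g_mul {f : Ω → ℝ} (hf : Integrable f μ) : Integrable (fun ω => g ω * f ω) μ :=
    hf.bdd_mul (hg.mono hm).aestronglyMeasurable hgC
  calc
    ∫ ω, g ω * (Z ω - Y ω) ∂μ = ∫ ω, g ω * ((μ[Z | m]) ω - Y ω) ∂μ := by
      simp only [mul_sub]
      rw [integral_sub (integrable_g_mul hZ) (integrable_g_mul hY),
        integral_sub (integrable_g_mul integrable_condExp) (integrable_g_mul hY),
        integral_mul_condExp_of_stronglyMeasurable_left hm hg (integrable_g_mul hZ) hZ]
    _ ≤ ∫ _, C * δ ∂μ := by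
      refine integral_mono_ae (integrable_g_mul (integrable_condExp.sub hY))
        (integrable_const _) ?_
      filter_upwards [hgC, hYZ] with ω hgω hYZω
      calc
        g ω * ((μ[Z | m]) ω - Y ω) ≤ |g ω| * |(μ[Z | m]) ω - Y ω| :=
          (le_abs_self _).trans_eq (abs_mul _ _)
        _ ≤ C * δ := mul_le_mul hgω hYZω (abs_nonneg _) ((abs_nonneg _).trans hgω)
    _ = μ.real Set.univ * (C * δ) := by rw [integral_const, smul_eq_mul]

end CondExp

section WeakMartingale

variable {Ω : Type*}

/-- The σ-algebra generated by `X k` and the sum of squares of the first `k` increments, on which an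
SoS-augmented weak martingale conditions `X (k + 1)`. It need not increase with `k`. -/
abbrev sosSigmaAlgebra (X : ℕ → Ω → ℝ) (k : ℕ) : MeasurableSpace Ω :=
  MeasurableSpace.comap (fun ω => (X k ω, sumSqIncrements (X · ω) k)) inferInstance

/-- `X 0, …, X r` is an SoS-augmented `δ`-weak martingale: each step has conditional drift at most
`δ`, given only the current value and the current sum of squares rather than the whole past. -/
def IsSoSAugmentedWeakMartingale [MeasurableSpace Ω] (X : ℕ → Ω → ℝ) (δ : ℝ) (r : ℕ)
    (μ : Measure Ω) : Prop :=
  ∀ i, 1 ≤ i → i ≤ r → ∀ᵐ ω ∂μ, |(μ[X i | sosSigmaAlgebra X (i - 1)]) ω - X (i - 1) ω| ≤ δ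

variable {X : ℕ → Ω → ℝ} {θ c K δ : ℝ} {k r : ℕ}

lemma measurable_stoppedWeight_sosSigmaAlgebra (X : ℕ → Ω → ℝ) (θ c : ℝ) (k : ℕ) :
    Measurable[sosSigmaAlgebra X k] fun ω => stoppedWeight θ c (X · ω) k := by
  have hF : Measurable fun p : ℝ × ℝ => if p.2 < θ then 2 * (p.1 - c) else 0 :=
    Measurable.ite (measurableSet_lt measurable_snd measurable_const) (by fun_prop)
      measurable_const
  exact hF.comp (comap_measurable _)

variable [MeasurableSpace Ω]

lemma measurable_sumSqIncrements (hX : ∀ i, Measurable (X i)) (n : ℕ) :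
    Measurable fun ω => sumSqIncrements (X · ω) n := by
  unfold sumSqIncrements
  fun_prop

lemma sosSigmaAlgebra_le (hX : ∀ i, Measurable (X i)) (k : ℕ) :
    sosSigmaAlgebra X k ≤ ‹MeasurableSpace Ω› :=
  ((hX k).prodMk (measurable_sumSqIncrements hX k)).comap_le

lemma measurable_stoppedWeight (hX : ∀ i, Measurable (X i)) (θ c : ℝ) (k : ℕ) :
    Measurable fun ω => stoppedWeight θ c (X · ω) k :=
  (measurable_stoppedWeight_sosSigmaAlgebra X θ c k).mono (sosSigmaAlgebra_le hX k) le_rfl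

variable {μ : Measure Ω}

lemma integrable_of_abs_sub_le [IsFiniteMeasure μ] {Y : Ω → ℝ} (hY : Measurable Y)
    (hYK : ∀ᵐ ω ∂μ, |Y ω - c| ≤ K) : Integrable Y μ := by
  refine .of_mem_Icc (c - K) (c + K) hY.aemeasurable (hYK.mono fun ω h => ?_)
  rwa [← Set.mem_Icc_iff_abs_le, abs_sub_comm]

lemma integrable_stoppedWeight_mul_sub [IsFiniteMeasure μ] (hX : ∀ i, Measurable (X i))
    (hK : ∀ᵐ ω ∂μ, |X k ω - c| ≤ K) (hk : Integrable (X k) μ) (hk' : Integrable (X (k + 1)) μ) :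
    Integrable (fun ω => stoppedWeight θ c (X · ω) k * (X (k + 1) ω - X k ω)) μ :=
  (hk'.sub hk).bdd_mul (measurable_stoppedWeight hX θ c k).aestronglyMeasurable
    (hK.mono fun ω => abs_stoppedWeight_le (x := (X · ω)))

lemma IsSoSAugmentedWeakMartingale.integral_stoppedWeight_mul_sub_le [IsProbabilityMeasure μ]
    (hmart : IsSoSAugmentedWeakMartingale X δ r μ) (hX : ∀ i, Measurable (X i)) (hkr : k < r)
    (hK : ∀ᵐ ω ∂μ, |X k ω - c| ≤ K) (hk : Integrable (X k) μ) (hk' : Integrable (X (k + 1)) μ) :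
    ∫ ω, stoppedWeight θ c (X · ω) k * (X (k + 1) ω - X k ω) ∂μ ≤ 2 * K * δ := by
  have := integral_mul_sub_le_of_abs_condExp_sub_le (sosSigmaAlgebra_le hX k)
    (measurable_stoppedWeight_sosSigmaAlgebra X θ c k).stronglyMeasurable
    (hK.mono fun ω => abs_stoppedWeight_le (x := (X · ω))) hk hk' (hmart (k + 1) k.succ_pos hkr)
  rwa [probReal_univ, one_mul] at this

lemma integrable_stoppedCrossTerm [IsFiniteMeasure μ] (hX : ∀ i, Measurable (X i))
    (hK : ∀ i ≤ r, ∀ᵐ ω ∂μ, |X i ω - c| ≤ K) :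
    Integrable (fun ω => stoppedCrossTerm θ c (X · ω) r) μ := by
  refine integrable_finsetSum _ fun k hk => ?_
  have hkr := Finset.mem_range.1 hk
  exact integrable_stoppedWeight_mul_sub hX (hK k hkr.le)
    (integrable_of_abs_sub_le (hX k) (hK k hkr.le))
    (integrable_of_abs_sub_le (hX (k + 1)) (hK (k + 1) hkr))

lemma IsSoSAugmentedWeakMartingale.integral_stoppedCrossTerm_le [IsProbabilityMeasure μ]
    (hmart : IsSoSAugmentedWeakMartingale X δ r μ) (hX : ∀ i, Measurable (X i))
    (hK : ∀ i ≤ r, ∀ᵐ ω ∂μ, |X i ω - c| ≤ K) :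
    ∫ ω, stoppedCrossTerm θ c (X · ω) r ∂μ ≤ r * (2 * K * δ) := by
  have hint : ∀ i ≤ r, Integrable (X i) μ := fun i hi => integrable_of_abs_sub_le (hX i) (hK i hi)
  calc
    ∫ ω, stoppedCrossTerm θ c (X · ω) r ∂μ =
        ∑ k ∈ Finset.range r, ∫ ω, stoppedWeight θ c (X · ω) k * (X (k + 1) ω - X k ω) ∂μ := by
      refine integral_finsetSum _ fun k hk => ?_
      have hkr := Finset.mem_range.1 hk
      exact integrable_stoppedWeight_mul_sub hX (hK k hkr.le) (hint k hkr.le) (hint (k + 1) hkr)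
    _ ≤ ∑ _k ∈ Finset.range r, 2 * K * δ := by
      refine Finset.sum_le_sum fun k hk => ?_
      have hkr := Finset.mem_range.1 hk
      exact hmart.integral_stoppedWeight_mul_sub_le hX hkr (hK k hkr.le) (hint k hkr.le)
        (hint (k + 1) hkr)
    _ = r * (2 * K * δ) := by simp

theorem IsSoSAugmentedWeakMartingale.integral_sq_sub_le [IsProbabilityMeasure μ]
    (hmart : IsSoSAugmentedWeakMartingale X δ r μ) (hX : ∀ i, Measurable (X i)) (hθ : 0 ≤ θ)
    (hK : ∀ i ≤ r, ∀ᵐ ω ∂μ, |X i ω - c| ≤ K) :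
    ∫ ω, (X r ω - c) ^ 2 ∂μ ≤ ∫ ω, (X 0 ω - c) ^ 2 ∂μ + θ + r * (2 * K * δ) +
      μ.real {ω | θ ≤ sumSqIncrements (X · ω) r} * (4 * K ^ 2) := by
  set B : Set Ω := {ω | θ ≤ sumSqIncrements (X · ω) r}
  have hB : MeasurableSet B := measurableSet_le measurable_const (measurable_sumSqIncrements hX r)
  have hsq : ∀ i ≤ r, Integrable (fun ω => (X i ω - c) ^ 2) μ := fun i hi =>
    .of_mem_Icc 0 (K ^ 2) (((hX i).sub_const c).pow_const 2).aemeasurable <|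
      (hK i hi).mono fun ω h => ⟨sq_nonneg _, sq_le_sq.2 (h.trans (le_abs_self K))⟩
  have hcross := integrable_stoppedCrossTerm (θ := θ) hX hK
  have hind : Integrable (B.indicator fun _ => 4 * K ^ 2) μ := (integrable_const _).indicator hB
  have hbase : Integrable (fun ω => (X 0 ω - c) ^ 2 + θ) μ :=
    (hsq 0 r.zero_le).add (integrable_const θ)
  have hbase_cross :
      Integrable (fun ω => (X 0 ω - c) ^ 2 + θ + stoppedCrossTerm θ c (X · ω) r) μ :=
    hbase.add hcross
  calc
    ∫ ω, (X r ω - c) ^ 2 ∂μ ≤ ∫ ω, ((X 0 ω - c) ^ 2 + θ + stoppedCrossTerm θ c (X · ω) r +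
        B.indicator (fun _ => 4 * K ^ 2) ω) ∂μ := by
      refine integral_mono_ae (hsq r le_rfl) (hbase_cross.add hind) ?_
      filter_upwards [(ae_ball_iff (Set.to_countable (Set.Iic r))).2 hK] with ω hω
      exact sq_sub_le_add_stoppedCrossTerm hθ hω
    _ = ∫ ω, (X 0 ω - c) ^ 2 ∂μ + θ + ∫ ω, stoppedCrossTerm θ c (X · ω) r ∂μ +
        μ.real B * (4 * K ^ 2) := by
      rw [integral_add hbase_cross hind, integral_add hbase hcross,
        integral_add (hsq 0 r.zero_le) (integrable_const θ), integral_indicator_const _ hB,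
        integral_const, probReal_univ, one_smul, smul_eq_mul]
    _ ≤ ∫ ω, (X 0 ω - c) ^ 2 ∂μ + θ + r * (2 * K * δ) + μ.real B * (4 * K ^ 2) := by
      gcongr
      exact hmart.integral_stoppedCrossTerm_le hX hK

end WeakMartingale

theorem sos_augmented_weak_martingale_sum_of_squares_general
    {Ω : Type*} [MeasurableSpace Ω] {μ : Measure Ω} [IsProbabilityMeasure μ]
    {r : ℕ} {δ θ p : ℝ} (hθ : 0 ≤ θ) {X : ℕ → Ω → ℝ} (hXmeas : ∀ i, Measurable (X i))
    (hrange : ∀ i ≤ r, ∀ᵐ ω ∂μ, X i ω ∈ Set.Icc (0 : ℝ) 1)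
    (hstart : ∀ᵐ ω ∂μ, X 0 ω = p) (hend : ∀ᵐ ω ∂μ, X r ω = 0 ∨ X r ω = 1)
    (hmart : IsSoSAugmentedWeakMartingale X δ r μ) :
    ENNReal.ofReal (p * (1 - p) - θ - r * δ) ≤ μ {ω | θ ≤ sumSqIncrements (X · ω) r} := by
  have hK : ∀ i ≤ r, ∀ᵐ ω ∂μ, |X i ω - 1 / 2| ≤ 1 / 2 := fun i hi =>
    (hrange i hi).mono fun ω h => abs_le.2 ⟨by linarith [h.1], by linarith [h.2]⟩
  have hsq_start : ∫ ω, (X 0 ω - 1 / 2) ^ 2 ∂μ = (p - 1 / 2) ^ 2 := by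
    rw [integral_congr_ae (hstart.mono fun ω h => by rw [h]), integral_const, probReal_univ,
      one_smul]
  have hsq_end : ∫ ω, (X r ω - 1 / 2) ^ 2 ∂μ = 1 / 4 := by
    have hquarter : ∀ᵐ ω ∂μ, (X r ω - 1 / 2) ^ 2 = 1 / 4 :=
      hend.mono fun ω h => by rcases h with h | h <;> rw [h] <;> norm_num
    rw [integral_congr_ae hquarter, integral_const, probReal_univ, one_smul]
  have hsecond_moment := hmart.integral_sq_sub_le hXmeas hθ hK
  rw [hsq_start, hsq_end] at hsecond_moment
  rw [ENNReal.ofReal_le_iff_le_toReal (measure_ne_top _ _), ← measureReal_def]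
  linarith

/-- **SoS-augmented weak martingales have large sum of squares.**
If `X₀,…,X_r` is an SoS-augmented `δ`-weak martingale with values in `[0,1]`,
`X₀ = 1/2` a.s. and `X_r ∈ {0,1}` a.s., where `0 < δ < 1/(100 r)`, then
`P[ Σ_{i=1}^r (X_i − X_{i−1})² ≥ 1/16 ] ≥ 1/20`. -/
theorem sos_augmented_weak_martingale_sum_of_squares
    {Ω : Type*} [MeasurableSpace Ω] (μ : Measure Ω) [IsProbabilityMeasure μ]
    (r : ℕ) (hr : 0 < r) (δ : ℝ) (hδ0 : 0 < δ) (hδ : δ < 1 / (100 * r))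
    (X : ℕ → Ω → ℝ) (hXmeas : ∀ i, Measurable (X i))
    (hrange : ∀ i ≤ r, ∀ᵐ ω ∂μ, X i ω ∈ Set.Icc (0 : ℝ) 1)
    (hstart : ∀ᵐ ω ∂μ, X 0 ω = 1 / 2)
    (hend : ∀ᵐ ω ∂μ, X r ω = 0 ∨ X r ω = 1)
    (hmart : ∀ i, 1 ≤ i → i ≤ r → ∀ᵐ ω ∂μ,
      |(μ[X i | MeasurableSpace.comap
          (fun ω => (X (i - 1) ω,
            ∑ j ∈ Finset.Icc 1 (i - 1), (X j ω - X (j - 1) ω) ^ 2))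
          inferInstance]) ω - X (i - 1) ω| ≤ δ) :
    (1 / 20 : ℝ≥0∞) ≤
      μ {ω | (1 : ℝ) / 16 ≤ ∑ i ∈ Finset.Icc 1 r, (X i ω - X (i - 1) ω) ^ 2} := by
  have hr' : (0 : ℝ) < 100 * r := by positivity
  have hδ' : δ * (100 * r) < 1 := (lt_div_iff₀ hr').1 hδ
  calc
    (1 / 20 : ℝ≥0∞) = ENNReal.ofReal (1 / 20) := by simp
    _ ≤ ENNReal.ofReal (1 / 2 * (1 - 1 / 2) - 1 / 16 - r * δ) :=
      ENNReal.ofReal_le_ofReal (by linarith)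
    _ ≤ _ := sos_augmented_weak_martingale_sum_of_squares_general (by norm_num) hXmeas hrange
      hstart hend hmart
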